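/- If n ≤ d + 1, then the restriction to the interval [0, d c⃗] of the quotient map 𝕃 → 𝕃/ℤω⃗ is a bijection from [0, d c⃗] onto 𝕃/ℤω⃗. -/

import Mathlib

/-- The subgroup of relations `p i • x⃗_i − c⃗` inside the free abelian group
`(Fin n → ℤ) × ℤ` on the generators `x⃗_1, …, x⃗_n, c⃗`. -/
def GLrels (n : ℕ) (p : Fin n → ℕ) : AddSubgroup ((Fin n → ℤ) × ℤ) :=
  AddSubgroup.closure (Set.range fun i : Fin n => ((Pi.single i (p i : ℤ), -1) : (Fin n → ℤ) × ℤ))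

/-- The grading group `𝕃 = ⟨x⃗_1, …, x⃗_n, c⃗⟩ / ⟨p_i x⃗_i − c⃗⟩`. -/
abbrev GLgroup (n : ℕ) (p : Fin n → ℕ) : Type :=
  ((Fin n → ℤ) × ℤ) ⧸ GLrels n p

/-- The generator `x⃗_i` of `𝕃`. -/
def GLx (n : ℕ) (p : Fin n → ℕ) (i : Fin n) : GLgroup n p :=
  QuotientAddGroup.mk (Pi.single i 1, 0)

/-- The generator `c⃗` of `𝕃`. -/
def GLc (n : ℕ) (p : Fin n → ℕ) : GLgroup n p :=
  QuotientAddGroup.mk (0, 1)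

/-- The positive cone `𝕃_+`: the submonoid of `𝕃` generated by `x⃗_1, …, x⃗_n` and `c⃗`. -/
def GLplus (n : ℕ) (p : Fin n → ℕ) : AddSubmonoid (GLgroup n p) :=
  AddSubmonoid.closure ({GLc n p} ∪ Set.range (GLx n p))

/-- The partial order relation on `𝕃`: `x⃗ ≤ y⃗` iff `y⃗ − x⃗ ∈ 𝕃_+`. -/
def GLle (n : ℕ) (p : Fin n → ℕ) (x y : GLgroup n p) : Prop :=
  y - x ∈ GLplus n p

/-- The dualizing element `ω⃗ = (n − d − 1) c⃗ − Σ_i x⃗_i` of `𝕃`. -/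
def GLomega (d n : ℕ) (p : Fin n → ℕ) : GLgroup n p :=
  ((n : ℤ) - d - 1) • GLc n p - ∑ i, GLx n p i

theorem GLsum_smul {G : Type*} [AddCommGroup G] {n : ℕ} (f : Fin n → ℤ) (x : G) :
    (∑ i, f i) • x = ∑ i, f i • x := Finset.sum_smul

/-- The level `t + Σ ⌊v_i / p_i⌋` of a representative. -/
def GLlev (n : ℕ) (p : Fin n → ℕ) (w : (Fin n → ℤ) × ℤ) : ℤ :=
  w.2 + ∑ i, w.1 i / (p i : ℤ)

theorem GLlev_add_rel (n : ℕ) (p : Fin n → ℕ) (hp : ∀ i, 0 < p i) (r : (Fin n → ℤ) × ℤ)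
    (hr : r ∈ GLrels n p) : ∀ w, GLlev n p (w + r) = GLlev n p w := by
  unfold GLrels at hr
  induction hr using AddSubgroup.closure_induction with
  | mem x hx =>
    obtain ⟨i, rfl⟩ := hx
    intro w
    have hpi : (p i : ℤ) ≠ 0 := by have := hp i; omega
    have : ∀ j, (w.1 j + (Pi.single i (p i : ℤ) : Fin n → ℤ) j) / (p j : ℤ)
        = w.1 j / (p j : ℤ) + (Pi.single i (1 : ℤ) : Fin n → ℤ) j := by
      intro j
      by_cases h : j = i
      · subst h
        simp [Int.add_ediv_of_dvd_right, Int.ediv_self hpi]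
      · simp [h]
    simp only [GLlev, Prod.fst_add, Prod.snd_add, Pi.add_apply, this, Finset.sum_add_distrib]
    have h1 : ∑ j, (Pi.single i (1 : ℤ) : Fin n → ℤ) j = 1 := by simp [Pi.single_apply]
    rw [h1]
    ring
  | zero => simp
  | add x y _ _ hx hy => intro w; rw [← add_assoc, hy, hx]
  | neg x _ hx => intro w; rw [← hx (w + -x)]; simp

theorem GLlev_congr (n : ℕ) (p : Fin n → ℕ) (hp : ∀ i, 0 < p i) (w w' : (Fin n → ℤ) × ℤ)
    (h : (QuotientAddGroup.mk w : GLgroup n p) = QuotientAddGroup.mk w') :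
    GLlev n p w = GLlev n p w' := by
  have := GLlev_add_rel n p hp _ (QuotientAddGroup.eq.1 h) w
  rw [← this]; simp

theorem GLlev_add_le (n : ℕ) (p : Fin n → ℕ) (hp : ∀ i, 0 < p i) (w w' : (Fin n → ℤ) × ℤ) :
    GLlev n p w + GLlev n p w' ≤ GLlev n p (w + w') := by
  have : ∑ i, w.1 i / (p i : ℤ) + ∑ i, w'.1 i / (p i : ℤ)
      ≤ ∑ i, (w.1 i + w'.1 i) / (p i : ℤ) := by
    rw [← Finset.sum_add_distrib]
    refine Finset.sum_le_sum fun i _ => ?_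
    have hpi : 0 < (p i : ℤ) := by exact_mod_cast hp i
    rw [Int.le_ediv_iff_mul_le hpi, add_mul]
    exact add_le_add (Int.ediv_mul_le _ hpi.ne') (Int.ediv_mul_le _ hpi.ne')
  simp only [GLlev, Prod.fst_add, Prod.snd_add, Pi.add_apply]
  linarith

theorem GLmk_eq (n : ℕ) (p : Fin n → ℕ) (w : (Fin n → ℤ) × ℤ) :
    (QuotientAddGroup.mk w : GLgroup n p) = ∑ i, w.1 i • GLx n p i + w.2 • GLc n p := by
  have : w = ∑ i, w.1 i • ((Pi.single i 1, 0) : (Fin n → ℤ) × ℤ) + w.2 • (0, 1) := by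
    ext j
    · simp [Prod.fst_sum, Finset.sum_apply, Pi.single_apply]
    · simp [Prod.snd_sum]
  conv_lhs => rw [this]
  change QuotientAddGroup.mk' (GLrels n p) _ = _
  rw [map_add, map_sum, map_zsmul]
  simp only [map_zsmul]
  rfl

theorem GLrel (n : ℕ) (p : Fin n → ℕ) (i : Fin n) : (p i : ℤ) • GLx n p i = GLc n p := by
  change (QuotientAddGroup.mk' (GLrels n p)) _ = QuotientAddGroup.mk' (GLrels n p) _
  rw [eq_comm, QuotientAddGroup.mk'_eq_mk']
  refine ⟨_, AddSubgroup.subset_closure ⟨i, rfl⟩, ?_⟩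
  ext j <;> simp [Pi.single_apply]

theorem GLplus_iff (n : ℕ) (p : Fin n → ℕ) (hp : ∀ i, 0 < p i) (w : (Fin n → ℤ) × ℤ) :
    (QuotientAddGroup.mk w : GLgroup n p) ∈ GLplus n p ↔ 0 ≤ GLlev n p w := by
  constructor
  · have key : ∀ z ∈ GLplus n p, ∀ w, (QuotientAddGroup.mk w : GLgroup n p) = z →
        0 ≤ GLlev n p w := by
      intro z hz
      unfold GLplus at hz
      induction hz using AddSubmonoid.closure_induction with
      | mem x hx =>
        intro w hw
        rcases hx with hx | ⟨i, rfl⟩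
        · rw [GLlev_congr n p hp w (0, 1) (hw.trans hx)]
          simp [GLlev]
        · rw [GLlev_congr n p hp w (Pi.single i 1, 0) hw]
          simp only [GLlev, zero_add]
          refine Finset.sum_nonneg fun j _ => Int.ediv_nonneg ?_ (by positivity)
          simp only [Pi.single_apply]; split_ifs <;> simp
      | zero =>
        intro w hw
        rw [GLlev_congr n p hp w 0 hw]; simp [GLlev]
      | add x y _ _ hx hy =>
        intro w hw
        induction x using QuotientAddGroup.induction_on with | H a =>
        induction y using QuotientAddGroup.induction_on with | H b =>
        rw [GLlev_congr n p hp w (a + b) hw]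
        have := GLlev_add_le n p hp a b
        have := hx a rfl
        have := hy b rfl
        linarith
    exact fun h => key _ h w rfl
  · intro h
    have e : (QuotientAddGroup.mk w : GLgroup n p)
        = ∑ i, (w.1 i % (p i : ℤ)).toNat • GLx n p i + (GLlev n p w).toNat • GLc n p := by
      have h1 : ∀ i, (w.1 i) • GLx n p i
          = (w.1 i % (p i : ℤ)).toNat • GLx n p i + (w.1 i / (p i : ℤ)) • GLc n p := by
        intro i
        have hpi : (p i : ℤ) ≠ 0 := by have := hp i; omega
        rw [← natCast_zsmul, Int.toNat_of_nonneg (Int.emod_nonneg _ hpi), ← GLrel n p i,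
          ← mul_zsmul, ← add_zsmul]
        congr 1
        have := Int.emod_add_mul_ediv (w.1 i) (p i)
        linarith
      rw [GLmk_eq]
      simp only [h1]
      rw [Finset.sum_add_distrib, ← GLsum_smul, add_assoc, ← add_zsmul,
        ← natCast_zsmul (GLc n p), Int.toNat_of_nonneg h, GLlev, add_comm w.2]
    rw [e]
    refine add_mem (sum_mem fun i _ => nsmul_mem (AddSubmonoid.subset_closure ?_) _)
      (nsmul_mem (AddSubmonoid.subset_closure ?_) _)
    · exact Or.inr ⟨i, rfl⟩
    · exact Or.inl rfl

/-- The level of `w - kω`. -/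
def GLg (d n : ℕ) (p : Fin n → ℕ) (w : (Fin n → ℤ) × ℤ) (k : ℤ) : ℤ :=
  w.2 + k * ((d : ℤ) + 1 - n) + ∑ i, (w.1 i + k) / (p i : ℤ)

/-- The shifted representative of `w - kω`. -/
def GLsh (d n : ℕ) (w : (Fin n → ℤ) × ℤ) (k : ℤ) : (Fin n → ℤ) × ℤ :=
  (fun i => w.1 i + k, w.2 + k * ((d : ℤ) + 1 - n))

theorem GLsh_mk (d n : ℕ) (p : Fin n → ℕ) (w : (Fin n → ℤ) × ℤ) (k : ℤ) :
    (QuotientAddGroup.mk (GLsh d n w k) : GLgroup n p)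
      = QuotientAddGroup.mk w - k • GLomega d n p := by
  rw [GLmk_eq, GLmk_eq, GLomega]
  simp only [GLsh, add_zsmul, Finset.sum_add_distrib, zsmul_sub, ← mul_zsmul, Finset.sum_zsmul]
  have : k * ((n : ℤ) - d - 1) = - (k * ((d : ℤ) + 1 - n)) := by ring
  rw [this, neg_zsmul]
  abel

theorem GLint_iff (d n : ℕ) (p : Fin n → ℕ) (hp : ∀ i, 0 < p i) (w : (Fin n → ℤ) × ℤ) (k : ℤ) :
    (GLle n p 0 (QuotientAddGroup.mk (GLsh d n w k)) ∧
      GLle n p (QuotientAddGroup.mk (GLsh d n w k)) ((d : ℤ) • GLc n p)) ↔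
    (0 ≤ GLg d n p w k ∧ GLg d n p w (k - 1) < 0) := by
  have e : (d : ℤ) • GLc n p - (QuotientAddGroup.mk (GLsh d n w k) : GLgroup n p)
      = QuotientAddGroup.mk ((0, (d : ℤ)) - GLsh d n w k) := by
    rw [GLmk_eq, GLmk_eq]
    simp only [Prod.fst_sub, Prod.snd_sub, Pi.sub_apply, sub_smul, Finset.sum_sub_distrib]
    simp
    abel
  unfold GLle
  rw [sub_zero, e, GLplus_iff n p hp, GLplus_iff n p hp]
  have h2 : ∀ i, (0 - (w.1 i + k)) / (p i : ℤ) = -1 - (w.1 i + (k - 1)) / (p i : ℤ) := by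
    intro i
    have hpi : 0 < (p i : ℤ) := by exact_mod_cast hp i
    have a1 := Int.emod_add_mul_ediv (w.1 i + (k - 1)) (p i)
    have a2 := Int.emod_nonneg (w.1 i + (k - 1)) hpi.ne'
    have a3 := Int.emod_lt_of_pos (w.1 i + (k - 1)) hpi
    rw [Int.ediv_eq_iff_of_pos hpi]
    constructor <;> nlinarith
  have h3 : GLlev n p ((0, (d : ℤ)) - GLsh d n w k) = -1 - GLg d n p w (k - 1) := by
    simp only [GLlev, GLsh, GLg, Prod.fst_sub, Prod.snd_sub, Pi.sub_apply, Pi.zero_apply, h2,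
      Finset.sum_sub_distrib]
    simp
    ring
  rw [h3]
  change 0 ≤ GLg d n p w k ∧ _ ↔ _
  constructor <;> rintro ⟨h, h'⟩ <;> exact ⟨h, by linarith⟩

theorem GLg_mono (d n : ℕ) (p : Fin n → ℕ) (hp : ∀ i, 0 < p i) (hn : n ≤ d + 1)
    (w : (Fin n → ℤ) × ℤ) : Monotone (GLg d n p w) := by
  intro a b hab
  unfold GLg
  have hm : (0 : ℤ) ≤ (d : ℤ) + 1 - n := by omega
  have : ∑ i, (w.1 i + a) / (p i : ℤ) ≤ ∑ i, (w.1 i + b) / (p i : ℤ) :=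
    Finset.sum_le_sum fun i _ =>
      Int.ediv_le_ediv (by exact_mod_cast hp i) (by linarith)
  nlinarith

theorem GLg_period (d n : ℕ) (p : Fin n → ℕ) (hp : ∀ i, 0 < p i) (hn : n ≤ d + 1)
    (w : (Fin n → ℤ) × ℤ) :
    ∃ P S : ℤ, 1 ≤ S ∧ ∀ j, GLg d n p w (j * P) = GLg d n p w 0 + j * S := by
  have hq : ∀ i, ∃ q : ℤ, 1 ≤ q ∧ ((∏ i, p i : ℕ) : ℤ) = q * (p i : ℤ) := by
    intro i
    obtain ⟨q, hq⟩ := Finset.dvd_prod_of_mem p (Finset.mem_univ i)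
    have h0 : 0 < ∏ i, p i := Finset.prod_pos fun i _ => hp i
    refine ⟨q, ?_, ?_⟩
    · have : 0 < q := Nat.pos_of_ne_zero (by rintro rfl; simp at hq; omega)
      exact_mod_cast this
    · rw [hq]; push_cast; ring
  choose q hq1 hq2 using hq
  have h0 : 1 ≤ ((∏ i, p i : ℕ) : ℤ) := by
    exact_mod_cast Finset.prod_pos fun i _ => hp i
  refine ⟨((∏ i, p i : ℕ) : ℤ), ((∏ i, p i : ℕ) : ℤ) * ((d : ℤ) + 1 - n) + ∑ i, q i, ?_, ?_⟩
  · have : (n : ℤ) ≤ ∑ i, q i := by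
      calc (n : ℤ) = ∑ i : Fin n, (1 : ℤ) := by simp
        _ ≤ _ := Finset.sum_le_sum fun i _ => hq1 i
    have hm : (0 : ℤ) ≤ (d : ℤ) + 1 - n := by omega
    nlinarith
  · intro j
    have h1 : ∀ i, (w.1 i + j * ((∏ i, p i : ℕ) : ℤ)) / (p i : ℤ)
        = w.1 i / (p i : ℤ) + j * q i := by
      intro i
      have hpi : (p i : ℤ) ≠ 0 := by have := hp i; omega
      rw [hq2 i, ← mul_assoc, Int.add_mul_ediv_right _ _ hpi]
    unfold GLg
    simp only [h1, Finset.sum_add_distrib, ← Finset.mul_sum, add_zero]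
    ring

/-- If `n ≤ d + 1`, then the quotient map `𝕃 → 𝕃/ℤω⃗` restricts to a
bijection from the interval `[0, d c⃗]` onto `𝕃/ℤω⃗`. -/
theorem interval_bijects_onto_quotient (d n : ℕ) (hd : 1 ≤ d) (p : Fin n → ℕ)
    (hp : ∀ i, 0 < p i) (hn : n ≤ d + 1) :
    Set.BijOn (QuotientAddGroup.mk' (AddSubgroup.zmultiples (GLomega d n p)))
      {z : GLgroup n p | GLle n p 0 z ∧ GLle n p z ((d : ℤ) • GLc n p)}
      Set.univ := by

  have hz0 : ∀ w : (Fin n → ℤ) × ℤ, GLsh d n w 0 = w := by intro w; simp [GLsh]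
  refine ⟨fun _ _ => Set.mem_univ _, ?_, ?_⟩
  · intro z hz z' hz' h
    obtain ⟨y, hy, hyz⟩ := (QuotientAddGroup.mk'_eq_mk' _).1 h
    obtain ⟨k, rfl⟩ := AddSubgroup.mem_zmultiples_iff.1 hy
    induction z using QuotientAddGroup.induction_on with | H w =>
    have e : z' = QuotientAddGroup.mk (GLsh d n w (-k)) := by
      rw [GLsh_mk, ← hyz]; simp
    rw [e, Set.mem_ofPred_eq, GLint_iff d n p hp] at hz'
    rw [← hz0 w, Set.mem_ofPred_eq, GLint_iff d n p hp] at hz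
    have hk : k = 0 := by
      have mono := GLg_mono d n p hp hn w
      rcases lt_trichotomy k 0 with hk | hk | hk
      · have := mono (show (0 : ℤ) ≤ -k - 1 by omega)
        linarith [hz.1, hz'.2]
      · exact hk
      · have := mono (show -k ≤ (0 : ℤ) - 1 by omega)
        linarith [hz.2, hz'.1]
    rw [e, hk, neg_zero, hz0]
  · intro u _
    obtain ⟨z, rfl⟩ := QuotientAddGroup.mk'_surjective _ u
    induction z using QuotientAddGroup.induction_on with | H w =>
    obtain ⟨P, S, hS, hP⟩ := GLg_period d n p hp hn w
    have mono := GLg_mono d n p hp hn w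
    have hne : ∃ k, 0 ≤ GLg d n p w k := by
      refine ⟨|GLg d n p w 0| * P, ?_⟩
      rw [hP]
      nlinarith [neg_abs_le (GLg d n p w 0), abs_nonneg (GLg d n p w 0)]
    have hb : ∃ b, ∀ k, 0 ≤ GLg d n p w k → b ≤ k := by
      refine ⟨-(|GLg d n p w 0| + 1) * P, fun k hk => ?_⟩
      by_contra hlt
      have := mono (not_le.1 hlt).le
      rw [hP] at this
      nlinarith [le_abs_self (GLg d n p w 0), abs_nonneg (GLg d n p w 0)]
    obtain ⟨k, hk, hmin⟩ := Int.exists_least_of_bdd hb hne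
    refine ⟨QuotientAddGroup.mk (GLsh d n w k), ?_, ?_⟩
    · rw [Set.mem_ofPred_eq, GLint_iff d n p hp]
      refine ⟨hk, ?_⟩
      by_contra hc
      have := hmin _ (not_lt.1 hc)
      omega
    · rw [QuotientAddGroup.mk'_eq_mk']
      exact ⟨k • GLomega d n p, AddSubgroup.mem_zmultiples_iff.2 ⟨k, rfl⟩, by rw [GLsh_mk]; simp⟩
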